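/- Let n ≥ 4, let r be an integer with 1 ≤ r ≤ n−2, and let (k_1,ℓ_1), …, (k_r,ℓ_r) be pairs of positive integers with n−1 ≥ k_1 > k_2 > … > k_r ≥ 2 and 2 = ℓ_1 < ℓ_2 < … < ℓ_r. Then there exists a strongly stable ideal I ⊊ S = K[x_1,…,x_n] of initial degree 2 whose set of corners is exactly {(k_i,ℓ_i) : 1 ≤ i ≤ r} and such that every corner of I has value 1. -/

import Mathlib

namespace ExtremalBetti

/-- A monomial of `K[x_1,…,x_n]`, identified with its exponent vector in `ℕ^n`. -/
abbrev Mon (n : ℕ) := Fin n → ℕ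

/-- The degree of a monomial. -/
def degree {n : ℕ} (u : Mon n) : ℕ := ∑ i, u i

/-- `m(u)`: the (1-based) index of the largest variable dividing `u`; `m(1) = 0`. -/
def maxVar {n : ℕ} (u : Mon n) : ℕ :=
  (Finset.univ.filter (fun i : Fin n => u i ≠ 0)).sup (fun i => (i : ℕ) + 1)

/-- The exponent vector of the variable `x_q` (1-based index `q`). -/
def X (n q : ℕ) : Mon n := fun i => if (i : ℕ) + 1 = q then 1 else 0

/-- `lexLT u v` : `v` is strictly lex-greater than `u` (lex order induced by
`x_1 > x_2 > … > x_n`). -/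
def lexLT {n : ℕ} (u v : Mon n) : Prop :=
  ∃ i : Fin n, (∀ j : Fin n, j < i → u j = v j) ∧ u i < v i

/-- `lexLE u v` : `v ≥_lex u`. -/
def lexLE {n : ℕ} (u v : Mon n) : Prop := u = v ∨ lexLT u v

/-- `L(top, bot)` in degree `d`: monomials `z` of degree `d` with `top ≥_lex z ≥_lex bot`. -/
def Lset {n : ℕ} (d : ℕ) (top bot : Mon n) : Set (Mon n) :=
  {z | degree z = d ∧ lexLE z top ∧ lexLE bot z}

/-- `A(k,d)`: monomials of degree `d` with `m(u) = k+1`. -/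
def A (n k d : ℕ) : Set (Mon n) := {u | degree u = d ∧ maxVar u = k + 1}

/-- The shadow of a set of monomials. -/
def shad {n : ℕ} (Ms : Set (Mon n)) : Set (Mon n) :=
  {z | ∃ u ∈ Ms, ∃ i : Fin n, z = u + Pi.single i 1}

/-- The `t`-fold iterated shadow. -/
def shadIter {n : ℕ} : ℕ → Set (Mon n) → Set (Mon n)
  | 0, Ms => Ms
  | t + 1, Ms => shad (shadIter t Ms)

/-- The lexicographic shadow `LexShad^t(𝔐) = L(x_1^{d+t}, w x_n^t)`, where `w` is the
lex-smallest element of `𝔐` (empty if `𝔐` is empty or has no lex-smallest element). -/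
def lexShad {n : ℕ} (t : ℕ) (Ms : Set (Mon n)) : Set (Mon n) :=
  {z | ∃ w ∈ Ms, (∀ v ∈ Ms, lexLE w v) ∧
      z ∈ Lset (degree w + t) ((degree w + t) • X n 1) (w + t • X n n)}

/-- A set of monomials is a monomial ideal iff it is upward closed under divisibility. -/
def IsMonIdeal {n : ℕ} (I : Set (Mon n)) : Prop :=
  ∀ u ∈ I, ∀ v : Mon n, (∀ i, u i ≤ v i) → v ∈ I

/-- `G(I)`: the minimal monomial generators of `I`. -/
def minGens {n : ℕ} (I : Set (Mon n)) : Set (Mon n) :=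
  {u ∈ I | ∀ v ∈ I, (∀ i, v i ≤ u i) → v = u}

/-- `G(I)_d`: the minimal generators of degree `d`. -/
def gens {n : ℕ} (I : Set (Mon n)) (d : ℕ) : Set (Mon n) :=
  {u ∈ minGens I | degree u = d}

/-- `I` is a strongly stable (monomial) ideal with `I ⊊ S` (i.e. `1 ∉ I`):
for every minimal generator `u`, every `i` with `x_i ∣ u` and every `j < i`,
`(x_j u)/x_i ∈ I`. -/
def StronglyStable {n : ℕ} (I : Set (Mon n)) : Prop :=
  IsMonIdeal I ∧ (0 : Mon n) ∉ I ∧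
    ∀ u ∈ minGens I, ∀ i : Fin n, u i ≠ 0 →
      ∀ j : Fin n, j < i → (u - Pi.single i 1 + Pi.single j 1) ∈ I

/-- The initial degree `α(I)` of the monomial ideal `I` equals `d`. -/
def initialDegree {n : ℕ} (I : Set (Mon n)) (d : ℕ) : Prop :=
  (∃ u ∈ I, degree u = d) ∧ ∀ u ∈ I, d ≤ degree u

/-- `(k,ℓ)` is a corner of `I`: `k, ℓ ≥ 1`, `k + 1 = max{m(u) : u ∈ G(I)_ℓ}`, and
`m(u) ≤ k` for every `u ∈ G(I)_j` with `j > ℓ`. -/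
def IsCorner {n : ℕ} (I : Set (Mon n)) (k ℓ : ℕ) : Prop :=
  1 ≤ k ∧ 1 ≤ ℓ ∧
  (∃ u ∈ gens I ℓ, maxVar u = k + 1) ∧
  (∀ u ∈ gens I ℓ, maxVar u ≤ k + 1) ∧
  (∀ j, ℓ < j → ∀ u ∈ gens I j, maxVar u ≤ k)

/-- The value of the corner `(k,ℓ)`: `|{u ∈ G(I)_ℓ : m(u) = k+1}|`. -/
noncomputable def cornerValue {n : ℕ} (I : Set (Mon n)) (k ℓ : ℕ) : ℕ :=
  {u ∈ gens I ℓ | maxVar u = k + 1}.ncard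

/-- The set of corners of `I`. -/
def corners {n : ℕ} (I : Set (Mon n)) : Set (ℕ × ℕ) :=
  {c | IsCorner I c.1 c.2}

/-- `(k,ℓ)` is a corner of the submodule `M = ⊕_j I_j e_j` of `S^m`. -/
def IsCornerMod {n m : ℕ} (I : Fin m → Set (Mon n)) (k ℓ : ℕ) : Prop :=
  1 ≤ k ∧ 1 ≤ ℓ ∧
  (∃ j, ∃ u ∈ gens (I j) ℓ, maxVar u = k + 1) ∧
  (∀ j, ∀ u ∈ gens (I j) ℓ, maxVar u ≤ k + 1) ∧
  (∀ d, ℓ < d → ∀ j, ∀ u ∈ gens (I j) d, maxVar u ≤ k)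

/-- The value of the corner `(k,ℓ)` of `M = ⊕_j I_j e_j`: the number of minimal
generators `u e_j` with `deg u = ℓ` and `m(u) = k+1`. -/
noncomputable def cornerValueMod {n m : ℕ} (I : Fin m → Set (Mon n)) (k ℓ : ℕ) : ℕ :=
  {p : Mon n × Fin m | p.1 ∈ gens (I p.2) ℓ ∧ maxVar p.1 = k + 1}.ncard

/-- The set of corners of the submodule `M = ⊕_j I_j e_j`. -/
def cornersMod {n m : ℕ} (I : Fin m → Set (Mon n)) : Set (ℕ × ℕ) :=
  {c | IsCornerMod I c.1 c.2}

/-- `t = max{p : λ_p ≤ s − p}` (and `t = 0` if no such `p` exists). -/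
def tVal (s : ℕ) (l : ℕ → ℕ) : ℕ :=
  ((Finset.Icc 1 s).filter (fun p => l p ≤ s - p)).sup id

/-- The associated sets `B_1, …, B_s` of the corner sequence
`(κ_1,λ_1), …, (κ_s,λ_s)` (given by `k, l : ℕ → ℕ` on indices `1,…,s`);
`B_0 = ∅`. -/
def assocB (n s : ℕ) (k l : ℕ → ℕ) (p : ℕ) : Set (Mon n) :=
  if p = 0 then ∅
  else if s = 1 then A n (k 1) (l 1)
  else if p = s then {u ∈ A n (k s) (l s) | lexLE ((l s) • X n (k s + 1)) u}
  else if l 1 = 2 ∧ p = 1 then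
    {u ∈ A n (k 1) 2 |
      lexLE (X n (if s = 2 then k 2 else k s - 1) + X n (k 1 + 1)) u}
  else if p ≤ tVal s l then
    {u ∈ A n (k p) (l p) |
      lexLE ((∑ j ∈ Finset.Icc (s - l p + 3) s, X n (k j)) +
          X n (k (s - l p + 2) - 1) + X n (k p + 1)) u}
  else
    {u ∈ A n (k p) (l p) |
      lexLE ((∑ j ∈ Finset.Icc (p + 1) s, X n (k j)) +
          (l p - (s - p)) • X n (k p + 1)) u}

/-- The admissible bound `b_p = |B_p \ LexShad^{λ_p−λ_{p−1}}(B_{p−1})|` of the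
`p`-th pair of the corner sequence. -/
noncomputable def admissibleBound (n s : ℕ) (k l : ℕ → ℕ) (p : ℕ) : ℕ :=
  (assocB n s k l p \ lexShad (l p - l (p - 1)) (assocB n s k l (p - 1))).ncard

/-!
Write `u ≼ v` when, for every `j`, the part of `v` in the first `j` variables has degree at least
that of `u`. The multiples of the monomials obtained from `u` by exchanges `x_i ↦ x_j`, `j < i`,
are exactly the `v ≽ u`, so a union of such up-sets is a strongly stable ideal. If `v ≽ u` has
larger degree than `u`, then dividing `v` by its last variable keeps it above `u`; hence a minimal
generator has the degree of every `u_i` below it.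

Take one monomial `u_i` with `m(u_i) = k_i + 1` for each degree `ℓ_i`, such that no `u_i` lies below
a later `u_j`. Then the ideal generated by their up-sets has the prescribed corners. If the family
is moreover maximal for `≼`, a second generator of degree `ℓ_i` with `m = k_i + 1` could replace
`u_i` and contradict maximality, so all the corner values are `1`. There are finitely many families,
so only the existence of one has to be shown, and a staircase family does it.
-/

section HeadDegree

variable {n : ℕ} {u v : Mon n}

/-- The degree of the part of the monomial `u` in its first `j` variables. The pointwise order
`headDegree u ≤ headDegree v` extends the Borel order to monomials of different degrees. -/
def headDegree (u : Mon n) (j : ℕ) : ℕ :=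
  ∑ i ∈ Finset.univ.filter fun i : Fin n => (i : ℕ) < j, u i

theorem headDegree_zero : headDegree (0 : Mon n) = 0 := by
  ext j
  simp [headDegree]

theorem headDegree_add (u v : Mon n) : headDegree (u + v) = headDegree u + headDegree v := by
  ext j
  simp [headDegree, Finset.sum_add_distrib]

theorem headDegree_sum {ι : Type*} (s : Finset ι) (u : ι → Mon n) :
    headDegree (∑ t ∈ s, u t) = ∑ t ∈ s, headDegree (u t) :=
  map_sum (⟨⟨headDegree, headDegree_zero⟩, headDegree_add⟩ : Mon n →+ ℕ → ℕ) u s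

theorem headDegree_single (a : Fin n) (j : ℕ) :
    headDegree (Pi.single a 1) j = if (a : ℕ) < j then 1 else 0 := by
  simp [headDegree, Finset.sum_pi_single']

theorem headDegree_card (u : Mon n) : headDegree u n = degree u := by
  simp [headDegree, degree]

theorem headDegree_succ (u : Mon n) (a : Fin n) :
    headDegree u (a + 1) = headDegree u a + u a := by
  have hinsert : Finset.univ.filter (fun i : Fin n => (i : ℕ) < a + 1) =
      insert a (Finset.univ.filter fun i : Fin n => (i : ℕ) < a) := by
    ext i
    simp only [Finset.mem_filter, Finset.mem_insert, Finset.mem_univ, true_and, Fin.ext_iff]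
    omega
  rw [headDegree, hinsert, Finset.sum_insert (by simp), add_comm, headDegree]

theorem headDegree_injective : Function.Injective (headDegree : Mon n → ℕ → ℕ) := by
  intro u v huv
  ext a
  have hsucc := congrFun huv (a + 1)
  rwa [headDegree_succ, headDegree_succ, huv, Nat.add_left_cancel_iff] at hsucc

theorem headDegree_mono : Monotone (headDegree : Mon n → ℕ → ℕ) :=
  fun _ _ huv _ => Finset.sum_le_sum fun i _ => huv i

theorem headDegree_le_degree (u : Mon n) (j : ℕ) : headDegree u j ≤ degree u :=
  Finset.sum_le_sum_of_subset (Finset.subset_univ _)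

theorem degree_le_of_headDegree_le (h : headDegree u ≤ headDegree v) : degree u ≤ degree v := by
  simpa only [headDegree_card] using h n

theorem maxVar_le_iff {c : ℕ} : maxVar u ≤ c ↔ ∀ i, u i ≠ 0 → (i : ℕ) < c := by
  simp [maxVar]

theorem maxVar_le_iff_headDegree_eq {c : ℕ} : maxVar u ≤ c ↔ headDegree u c = degree u := by
  rw [maxVar_le_iff, headDegree, degree, Finset.sum_filter,
    Finset.sum_eq_sum_iff_of_le fun i _ => by split_ifs <;> simp]
  simp only [Finset.mem_univ, forall_const, ite_eq_left_iff, eq_comm (a := 0)]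
  exact forall_congr' fun i => not_imp_comm

theorem maxVar_le_of_headDegree_le (h : headDegree u ≤ headDegree v)
    (hdeg : degree v = degree u) : maxVar v ≤ maxVar u := by
  rw [maxVar_le_iff_headDegree_eq]
  refine (headDegree_le_degree v _).antisymm ?_
  rw [hdeg, ← maxVar_le_iff_headDegree_eq.mp le_rfl]
  exact h _

theorem exists_maxVar_eq_succ (hu : u ≠ 0) : ∃ a : Fin n, u a ≠ 0 ∧ maxVar u = a + 1 := by
  obtain ⟨i, hi⟩ := Function.ne_iff.mp hu
  obtain ⟨a, ha, hmax⟩ := Finset.exists_mem_eq_sup (Finset.univ.filter fun i => u i ≠ 0)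
    ⟨i, by simpa using hi⟩ fun i => (i : ℕ) + 1
  exact ⟨a, by simpa using ha, hmax⟩

theorem sub_single_add_single {a : Fin n} (ha : u a ≠ 0) :
    u - Pi.single a 1 + Pi.single a 1 = u := by
  refine tsub_add_cancel_of_le fun i => ?_
  obtain rfl | hi := eq_or_ne i a
  · simpa [Nat.one_le_iff_ne_zero] using ha
  · simp [hi]

theorem headDegree_le_exchange {i j : Fin n} (hi : u i ≠ 0) (hji : j ≤ i) :
    headDegree u ≤ headDegree (u - Pi.single i 1 + Pi.single j 1) := by
  have hsingle (c : ℕ) : headDegree (Pi.single i 1) c ≤ headDegree (Pi.single j 1) c := by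
    rw [headDegree_single, headDegree_single]
    split_ifs <;> omega
  calc headDegree u
      = headDegree (u - Pi.single i 1) + headDegree (Pi.single i 1) := by
        rw [← headDegree_add, sub_single_add_single hi]
    _ ≤ headDegree (u - Pi.single i 1) + headDegree (Pi.single j 1) := add_le_add le_rfl hsingle
    _ = headDegree (u - Pi.single i 1 + Pi.single j 1) := (headDegree_add _ _).symm

theorem exists_lt_headDegree_le (h : headDegree u ≤ headDegree v) (hdeg : degree u < degree v) :
    ∃ w < v, headDegree u ≤ headDegree w := by
  have hv : v ≠ 0 := by
    rintro rfl
    simp [degree] at hdeg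
  obtain ⟨a, ha, hmax⟩ := exists_maxVar_eq_succ hv
  have hcancel := sub_single_add_single ha
  refine ⟨v - Pi.single a 1, lt_of_le_of_ne tsub_le_self fun heq => ?_, fun j => ?_⟩
  · simp [heq] at hcancel
  have hadd : headDegree (v - Pi.single a 1) j + (if (a : ℕ) < j then 1 else 0) =
      headDegree v j := by
    rw [← headDegree_single, ← Pi.add_apply, ← headDegree_add, hcancel]
  split_ifs at hadd with haj
  · have hfull : headDegree v j = degree v :=
      maxVar_le_iff_headDegree_eq.mp (hmax.trans_le haj)
    have hle := headDegree_le_degree u j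
    change headDegree u j ≤ headDegree (v - Pi.single a 1) j
    omega
  · exact (h j).trans_eq hadd.symm

theorem finite_A (n k d : ℕ) : (A n k d).Finite :=
  (Set.finite_Iic fun _ => d).subset fun u hu i =>
    hu.1 ▸ Finset.single_le_sum_of_canonicallyOrdered (f := u) (Finset.mem_univ i)

end HeadDegree

section BorelIdeal

variable {n : ℕ} {ι : Type*} {u : ι → Mon n} {v : Mon n}

/-- The smallest strongly stable ideal containing all the monomials `u i`. -/
def borelIdeal (u : ι → Mon n) : Set (Mon n) := {v | ∃ i, headDegree (u i) ≤ headDegree v}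

theorem mem_borelIdeal_self (u : ι → Mon n) (i : ι) : u i ∈ borelIdeal u := ⟨i, le_rfl⟩

theorem stronglyStable_borelIdeal (hu : ∀ i, u i ≠ 0) : StronglyStable (borelIdeal u) := by
  refine ⟨?_, ?_, ?_⟩
  · rintro v ⟨i, hi⟩ w hvw
    exact ⟨i, hi.trans (headDegree_mono hvw)⟩
  · rintro ⟨i, hi⟩
    refine hu i (headDegree_injective (hi.antisymm ?_))
    simp [headDegree_zero]
  · rintro v ⟨⟨i, hi⟩, -⟩ a ha b hba
    exact ⟨i, hi.trans (headDegree_le_exchange ha hba.le)⟩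

theorem initialDegree_borelIdeal {i₀ : ι} (h : ∀ i, degree (u i₀) ≤ degree (u i)) :
    initialDegree (borelIdeal u) (degree (u i₀)) :=
  ⟨⟨u i₀, mem_borelIdeal_self u i₀, rfl⟩,
    fun _ ⟨i, hi⟩ => (h i).trans (degree_le_of_headDegree_le hi)⟩

theorem degree_eq_of_mem_minGens_borelIdeal (hv : v ∈ minGens (borelIdeal u)) {i : ι}
    (hi : headDegree (u i) ≤ headDegree v) : degree v = degree (u i) := by
  refine (degree_le_of_headDegree_le hi).eq_of_not_lt' fun hlt => ?_
  obtain ⟨w, hwv, hw⟩ := exists_lt_headDegree_le hi hlt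
  exact hwv.ne (hv.2 w ⟨i, hw⟩ hwv.le)

end BorelIdeal

section CornerFamily

variable {n : ℕ} {ι : Type*} {k l : ι → ℕ} {u : ι → Mon n}

/-- A choice, for each prospective corner `(k i, l i)`, of a monomial of degree `l i` with
`m = k i + 1` that does not lie in the Borel ideal of the monomials chosen for smaller indices. -/
structure IsCornerFamily [LE ι] (k l : ι → ℕ) (u : ι → Mon n) : Prop where
  mem_A : ∀ i, u i ∈ A n (k i) (l i)
  le_of_headDegree_le : ∀ ⦃i j⦄, headDegree (u i) ≤ headDegree (u j) → j ≤ i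

theorem exists_maximalFor_isCornerFamily [LE ι] [Finite ι]
    (h : ∃ u : ι → Mon n, IsCornerFamily k l u) :
    ∃ u : ι → Mon n, MaximalFor (IsCornerFamily k l) (fun w i => headDegree (w i)) u :=
  Set.Finite.exists_maximalFor _ {u | IsCornerFamily k l u}
    ((Set.Finite.pi' fun i => finite_A n (k i) (l i)).subset fun _ hu => hu.mem_A) h

namespace IsCornerFamily

section LE

variable [LE ι]

theorem degree_eq (hu : IsCornerFamily k l u) (i : ι) : degree (u i) = l i := (hu.mem_A i).1

theorem maxVar_eq (hu : IsCornerFamily k l u) (i : ι) : maxVar (u i) = k i + 1 := (hu.mem_A i).2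

theorem ne_zero (hu : IsCornerFamily k l u) (i : ι) : u i ≠ 0 := by
  intro h
  have := hu.maxVar_eq i
  simp [h, maxVar] at this

theorem exists_of_mem_gens (hu : IsCornerFamily k l u) {v : Mon n} {d : ℕ}
    (hv : v ∈ gens (borelIdeal u) d) :
    ∃ i, l i = d ∧ headDegree (u i) ≤ headDegree v ∧ maxVar v ≤ k i + 1 := by
  obtain ⟨i, hi⟩ := hv.1.1
  have hdeg := degree_eq_of_mem_minGens_borelIdeal hv.1 hi
  refine ⟨i, ?_, hi, ?_⟩
  · rw [← hu.degree_eq, ← hdeg, hv.2]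
  · exact hu.maxVar_eq i ▸ maxVar_le_of_headDegree_le hi hdeg

end LE

theorem initialDegree_borelIdeal [Preorder ι] (hu : IsCornerFamily k l u) (hl : Monotone l) {i₀ : ι}
    (hi₀ : IsBot i₀) : initialDegree (borelIdeal u) (l i₀) := by
  rw [← hu.degree_eq]
  refine ExtremalBetti.initialDegree_borelIdeal fun i => ?_
  simpa only [hu.degree_eq] using hl (hi₀ i)

section LinearOrder

variable [LinearOrder ι]

theorem apply_mem_gens (hu : IsCornerFamily k l u) (hl : StrictMono l) (i : ι) :
    u i ∈ gens (borelIdeal u) (l i) := by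
  refine ⟨⟨mem_borelIdeal_self u i, ?_⟩, hu.degree_eq i⟩
  rintro v ⟨j, hj⟩ hvi
  have hv : headDegree v ≤ headDegree (u i) := headDegree_mono hvi
  have hji : l j ≤ l i := by
    simpa only [hu.degree_eq] using degree_le_of_headDegree_le (hj.trans hv)
  obtain rfl : i = j := (hu.le_of_headDegree_le (hj.trans hv)).antisymm (hl.le_iff_le.mp hji)
  exact headDegree_injective (hv.antisymm hj)

theorem eq_of_mem_gens (hu : IsCornerFamily k l u) (hl : StrictMono l) {v : Mon n} {i j : ι}
    (hv : v ∈ gens (borelIdeal u) (l i)) (hj : headDegree (u j) ≤ headDegree v) : j = i := by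
  apply hl.injective
  rw [← hu.degree_eq j, ← degree_eq_of_mem_minGens_borelIdeal hv.1 hj, hv.2]

theorem isCorner (hu : IsCornerFamily k l u) (hk : StrictAnti k) (hl : StrictMono l)
    {i : ι} (hki : 1 ≤ k i) (hli : 1 ≤ l i) : IsCorner (borelIdeal u) (k i) (l i) := by
  refine ⟨hki, hli, ⟨u i, hu.apply_mem_gens hl i, hu.maxVar_eq i⟩, fun v hv => ?_,
    fun d hd v hv => ?_⟩
  · obtain ⟨j, hj, -, hmax⟩ := hu.exists_of_mem_gens hv
    rwa [hl.injective hj] at hmax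
  · obtain ⟨j, rfl, -, hmax⟩ := hu.exists_of_mem_gens hv
    exact hmax.trans (hk (hl.lt_iff_lt.mp hd))

theorem corners_borelIdeal (hu : IsCornerFamily k l u) (hk : StrictAnti k) (hl : StrictMono l)
    (hk1 : ∀ i, 1 ≤ k i) (hl1 : ∀ i, 1 ≤ l i) :
    corners (borelIdeal u) = Set.range fun i => (k i, l i) := by
  refine Set.Subset.antisymm ?_ ?_
  · rintro ⟨a, d⟩ ⟨-, -, ⟨v, hv, hva⟩, hle, -⟩
    obtain ⟨i, rfl, -, hmax⟩ := hu.exists_of_mem_gens hv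
    have hka := hle (u i) (hu.apply_mem_gens hl i)
    rw [hu.maxVar_eq] at hka
    obtain rfl : k i = a := Nat.succ_injective (hka.antisymm (hva.symm.trans_le hmax))
    exact ⟨i, rfl⟩
  · rintro _ ⟨i, rfl⟩
    exact hu.isCorner hk hl (hk1 i) (hl1 i)

theorem update (hu : IsCornerFamily k l u) (hl : StrictMono l) {v : Mon n} {i : ι}
    (hv : v ∈ gens (borelIdeal u) (l i)) (hmax : maxVar v = k i + 1)
    (huv : headDegree (u i) ≤ headDegree v) :
    IsCornerFamily k l (Function.update u i v) where
  mem_A := by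
    intro a
    obtain rfl | ha := eq_or_ne a i
    · simpa using ⟨hv.2, hmax⟩
    · simpa [ha] using hu.mem_A a
  le_of_headDegree_le := by
    intro a b hab
    by_cases ha : a = i <;> by_cases hb : b = i
    · rw [ha, hb]
    · rw [ha, Function.update_self, Function.update_of_ne hb] at hab
      rw [ha]
      exact hu.le_of_headDegree_le (huv.trans hab)
    · rw [hb, Function.update_self, Function.update_of_ne ha] at hab
      exact absurd (hu.eq_of_mem_gens hl hv hab) ha
    · rw [Function.update_of_ne ha, Function.update_of_ne hb] at hab
      exact hu.le_of_headDegree_le hab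

end LinearOrder

end IsCornerFamily

theorem cornerValue_borelIdeal_of_maximalFor [LinearOrder ι]
    (hu : MaximalFor (IsCornerFamily k l) (fun w i => headDegree (w i)) u) (hl : StrictMono l)
    (i : ι) : cornerValue (borelIdeal u) (k i) (l i) = 1 := by
  obtain ⟨hfam, hmaximal⟩ := hu
  rw [cornerValue, Set.ncard_eq_one]
  refine ⟨u i, Set.eq_singleton_iff_unique_mem.mpr
    ⟨⟨hfam.apply_mem_gens hl i, hfam.maxVar_eq i⟩, ?_⟩⟩
  rintro v ⟨hv, hmax⟩
  obtain ⟨j, hj, huv, -⟩ := hfam.exists_of_mem_gens hv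
  obtain rfl : j = i := hl.injective hj
  have hle : (fun a => headDegree (u a)) ≤ fun a => headDegree (Function.update u j v a) := by
    intro a
    obtain rfl | ha := eq_or_ne a j
    · simpa using huv
    · simp [ha]
  have hge := hmaximal (hfam.update hl hv hmax huv) hle j
  simp only [Function.update_self] at hge
  exact headDegree_injective (hge.antisymm huv)

end CornerFamily

section WordMonomial

variable {n m m' : ℕ} {w w' : ℕ → Fin n}

/-- The monomial that is the product of the variables with 0-based indices
`w 0, …, w (m - 1)`. -/
def wordMonomial (w : ℕ → Fin n) (m : ℕ) : Mon n := ∑ t ∈ Finset.range m, Pi.single (w t) 1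

theorem headDegree_wordMonomial (w : ℕ → Fin n) (m j : ℕ) :
    headDegree (wordMonomial w m) j = {t ∈ Finset.range m | (w t : ℕ) < j}.card := by
  simp [wordMonomial, headDegree_sum, headDegree_single]

theorem degree_wordMonomial (w : ℕ → Fin n) (m : ℕ) : degree (wordMonomial w m) = m := by
  simp [← headDegree_card, headDegree_wordMonomial]

theorem maxVar_wordMonomial_le_iff {c : ℕ} :
    maxVar (wordMonomial w m) ≤ c ↔ ∀ t < m, (w t : ℕ) < c := by
  have hcard := Finset.card_filter_eq_iff (s := Finset.range m) (p := fun t => (w t : ℕ) < c)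
  rw [maxVar_le_iff_headDegree_eq, headDegree_wordMonomial, degree_wordMonomial]
  simpa only [Finset.card_range, Finset.mem_range] using hcard

theorem maxVar_wordMonomial_succ (hw : Monotone w) :
    maxVar (wordMonomial w (m + 1)) = w m + 1 := by
  refine le_antisymm (maxVar_wordMonomial_le_iff.mpr fun t ht => ?_)
    (maxVar_wordMonomial_le_iff.mp le_rfl m m.lt_succ_self)
  exact Nat.lt_succ_of_le (hw (Nat.le_of_lt_succ ht))

theorem apply_le_of_headDegree_wordMonomial_le (hw : Monotone w) (hw' : Monotone w')
    (h : headDegree (wordMonomial w m) ≤ headDegree (wordMonomial w' m')) {t : ℕ} (ht : t < m) :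
    w' t ≤ w t := by
  by_contra! hlt
  have hsub : Finset.range (t + 1) ⊆ {s ∈ Finset.range m | (w s : ℕ) < w t + 1} := by
    intro s hs
    rw [Finset.mem_range] at hs
    rw [Finset.mem_filter, Finset.mem_range]
    exact ⟨by omega, Nat.lt_succ_of_le (hw (Nat.le_of_lt_succ hs))⟩
  have hsub' : {s ∈ Finset.range m' | (w' s : ℕ) < w t + 1} ⊆ Finset.range t := by
    intro s hs
    rw [Finset.mem_filter] at hs
    rw [Finset.mem_range]
    by_contra! hts
    exact (hlt.trans_le (hw' hts)).not_ge (Nat.le_of_lt_succ hs.2)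
  have hcard := h (w t + 1)
  rw [headDegree_wordMonomial, headDegree_wordMonomial] at hcard
  have := ((Finset.card_le_card hsub).trans hcard).trans (Finset.card_le_card hsub')
  simp at this

end WordMonomial

section Staircase

/-- The (0-based) letters of the word of length `m`, ending in the letter `k`, assigned to an index
with `a` predecessors and `b` successors. Capped by `a`, the letters climb one step per position
until they jump to `k` at position `b`. -/
def stairLetter (a b m k t : ℕ) : ℕ :=
  if t + 1 < m then min a (if t < b then t + 1 else k) else k

variable {a b m k : ℕ}

theorem stairLetter_le (hbk : b ≤ k) (t : ℕ) : stairLetter a b m k t ≤ k := by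
  unfold stairLetter
  split_ifs <;> omega

theorem stairLetter_mono (hbk : b ≤ k) : Monotone (stairLetter a b m k) := by
  intro s t hst
  unfold stairLetter
  split_ifs <;> omega

theorem stairLetter_of_le {t : ℕ} (ht : m ≤ t + 1) : stairLetter a b m k t = k :=
  if_neg ht.not_gt

theorem exists_stairLetter_lt {a' b' m' k' : ℕ} (ha : a < a') (hb : b' < b) (hm : m < m')
    (ham : a + 2 ≤ m) (hbk' : b' + 2 ≤ k') :
    ∃ t < m, stairLetter a b m k t < stairLetter a' b' m' k' t := by
  -- Either the later word has already jumped at position `b'` and the earlier one has not, or the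
  -- earlier word is too short for that and is already held back by its cap `a` at position `m - 2`.
  refine ⟨min b' (m - 2), by omega, ?_⟩
  rw [stairLetter, stairLetter, if_pos (by omega), if_pos (by omega), if_pos (by omega)]
  split_ifs <;> omega

variable {ι : Type*} [LinearOrder ι]

theorem ncard_Iio_add_le {l : ι → ℕ} (hl : StrictMono l) {c : ℕ} (hc : ∀ i, c ≤ l i) (i : ι) :
    (Set.Iio i).ncard + c ≤ l i := by
  have hcard : (Set.Iio i).ncard ≤ (Set.Ico c (l i)).ncard :=
    Set.ncard_le_ncard_of_injOn l (fun j hj => ⟨hc j, hl hj⟩) hl.injective.injOn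
  rw [Set.ncard_Ico_nat] at hcard
  have := hc i
  omega

theorem exists_isCornerFamily [Finite ι] {n : ℕ} {k l : ι → ℕ} (hk : StrictAnti k)
    (hl : StrictMono l) (hkn : ∀ i, k i < n) (hk2 : ∀ i, 2 ≤ k i) (hl2 : ∀ i, 2 ≤ l i) :
    ∃ u : ι → Mon n, IsCornerFamily k l u := by
  have hk' (i : ι) : (Set.Ioi i).ncard + 2 ≤ k i :=
    ncard_Iio_add_le (ι := ιᵒᵈ) (l := k) (fun _ _ hij => hk hij) hk2 i
  have hbk (i : ι) : (Set.Ioi i).ncard ≤ k i := by have := hk' i; omega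
  let w (i : ι) (t : ℕ) : Fin n :=
    ⟨stairLetter (Set.Iio i).ncard (Set.Ioi i).ncard (l i) (k i) t,
      (stairLetter_le (hbk i) t).trans_lt (hkn i)⟩
  have hw (i : ι) : Monotone (w i) := fun _ _ hst => stairLetter_mono (hbk i) hst
  refine ⟨fun i => wordMonomial (w i) (l i), fun i => ⟨degree_wordMonomial _ _, ?_⟩, ?_⟩
  · obtain ⟨m, hm⟩ := Nat.exists_eq_add_of_le' (one_le_two.trans (hl2 i))
    rw [hm, maxVar_wordMonomial_succ (hw i)]
    exact congrArg (· + 1) (stairLetter_of_le hm.le)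
  · intro i j hij
    by_contra! hlt
    obtain ⟨t, ht, hlt'⟩ := exists_stairLetter_lt (k := k i)
      (Set.ncard_lt_ncard (Set.Iio_ssubset_Iio hlt)) (Set.ncard_lt_ncard (Set.Ioi_ssubset_Ioi hlt))
      (hl hlt) (ncard_Iio_add_le hl hl2 i) (hk' j)
    exact (apply_le_of_headDegree_wordMonomial_le (hw i) (hw j) hij ht).not_gt hlt'

end Staircase

theorem statement5_general (n r : ℕ) (hr1 : 1 ≤ r)
    (k l : ℕ → ℕ)
    (hk1 : k 1 ≤ n - 1) (hkr : 2 ≤ k r) (hl1 : 2 ≤ l 1)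
    (hkdec : ∀ i j, 1 ≤ i → i < j → j ≤ r → k j < k i)
    (hlinc : ∀ i j, 1 ≤ i → i < j → j ≤ r → l i < l j) :
    ∃ I : Set (Mon n), StronglyStable I ∧ initialDegree I (l 1) ∧
      corners I = {c | ∃ i, 1 ≤ i ∧ i ≤ r ∧ c = (k i, l i)} ∧
      ∀ i, 1 ≤ i → i ≤ r → cornerValue I (k i) (l i) = 1 := by
  let first : Set.Icc 1 r := ⟨1, le_rfl, hr1⟩
  let last : Set.Icc 1 r := ⟨r, hr1, le_rfl⟩
  have hk : StrictAnti fun i : Set.Icc 1 r => k i := fun i j hij => hkdec i j i.2.1 hij j.2.2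
  have hl : StrictMono fun i : Set.Icc 1 r => l i := fun i j hij => hlinc i j i.2.1 hij j.2.2
  have hk2 (i : Set.Icc 1 r) : 2 ≤ k i := hkr.trans (hk.antitone (b := last) i.2.2)
  have hl2 (i : Set.Icc 1 r) : 2 ≤ l i := hl1.trans (hl.monotone (a := first) i.2.1)
  have hkn (i : Set.Icc 1 r) : k i < n := by
    have hle : k i ≤ k 1 := hk.antitone (a := first) i.2.1
    have := hk2 i
    omega
  obtain ⟨u, hu⟩ := exists_maximalFor_isCornerFamily (exists_isCornerFamily hk hl hkn hk2 hl2)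
  refine ⟨borelIdeal u, stronglyStable_borelIdeal hu.prop.ne_zero,
    hu.prop.initialDegree_borelIdeal hl.monotone (i₀ := first) fun i => i.2.1, ?_,
    fun i hi hir => cornerValue_borelIdeal_of_maximalFor hu hl ⟨i, hi, hir⟩⟩
  rw [hu.prop.corners_borelIdeal hk hl (fun i => one_le_two.trans (hk2 i))
    fun i => one_le_two.trans (hl2 i)]
  ext c
  simp [eq_comm, and_assoc]

/-- Let `n ≥ 4`, `1 ≤ r ≤ n−2`, and `(k_1,ℓ_1),…,(k_r,ℓ_r)` with
`n−1 ≥ k_1 > … > k_r ≥ 2` and `2 = ℓ_1 < … < ℓ_r`. Then there exists a strongly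
stable ideal `I ⊊ S` of initial degree 2 whose set of corners is exactly
`{(k_i,ℓ_i) : 1 ≤ i ≤ r}` and such that every corner of `I` has value 1. -/
theorem statement5 (n r : ℕ) (hn : 4 ≤ n) (hr1 : 1 ≤ r) (hr : r ≤ n - 2)
    (k l : ℕ → ℕ)
    (hk1 : k 1 ≤ n - 1) (hkr : 2 ≤ k r) (hl1 : l 1 = 2)
    (hkdec : ∀ i j, 1 ≤ i → i < j → j ≤ r → k j < k i)
    (hlinc : ∀ i j, 1 ≤ i → i < j → j ≤ r → l i < l j) :
    ∃ I : Set (Mon n), StronglyStable I ∧ initialDegree I 2 ∧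
      corners I = {c | ∃ i, 1 ≤ i ∧ i ≤ r ∧ c = (k i, l i)} ∧
      ∀ i, 1 ≤ i → i ≤ r → cornerValue I (k i) (l i) = 1 := by
  simpa only [hl1] using statement5_general n r hr1 k l hk1 hkr hl1.ge hkdec hlinc

end ExtremalBetti
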